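/- Let α, β be reals with 2 < α ≤ 3 and 4α − β = 6, and let G be a minimal counterexample for the class 𝔅 of bipartite graphs and parameters α, β. Then G does not contain two non-adjacent vertices having at least three common neighbors. -/

import Mathlib

/-!
Suppose `u ≠ v` are non-adjacent and have at least three common neighbours. Identify `u` and `v`.
The resulting graph has one vertex less and at least three edges less, because the edges `vw` and
`uw` become equal for each common neighbour `w`; since `α ≤ 3` its quality is still positive. It
has at least four vertices, so by minimality it has a bipartite cut. The preimage of that cut under
the identification map is a vertex cut of `G`, and it is bipartite because the identification map
is a graph homomorphism (`u` and `v` being non-adjacent) along which a 2-colouring pulls back.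
-/

open SimpleGraph

/-- `M` is a vertex cut of `G`: the complement of `M` can be partitioned into two nonempty
sets `L`, `R` with no edge of `G` joining a vertex of `L` to a vertex of `R`. -/
def IsVertexCut {V : Type*} (G : SimpleGraph V) (M : Set V) : Prop :=
  ∃ L R : Set V, L.Nonempty ∧ R.Nonempty ∧ Disjoint L R ∧ L ∪ R = Mᶜ ∧
    ∀ x ∈ L, ∀ y ∈ R, ¬ G.Adj x y

/-- `(M, L, R)` is a separation of `G`. -/
def IsSeparation {V : Type*} (G : SimpleGraph V) (M L R : Set V) : Prop :=
  L.Nonempty ∧ R.Nonempty ∧ M ∪ L ∪ R = Set.univ ∧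
  Disjoint M L ∧ Disjoint M R ∧ Disjoint L R ∧
  ∀ x ∈ L, ∀ y ∈ R, ¬ G.Adj x y

/-- The quality function `q_{α,β}(G) = α|V(G)| − |E(G)| − β`. -/
noncomputable def quality {V : Type*} (α β : ℝ) (G : SimpleGraph V) : ℝ :=
  α * Nat.card V - Nat.card G.edgeSet - β

/-- degree of a vertex as the cardinality of its neighbor set. -/
noncomputable def vdeg {V : Type*} (G : SimpleGraph V) (v : V) : ℕ :=
  (G.neighborSet v).ncard

/-- The class of forests. -/
def ForestClass : ∀ (W : Type), SimpleGraph W → Prop := fun _ H => H.IsAcyclic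

/-- The class of bipartite graphs. -/
def BipartiteClass : ∀ (W : Type), SimpleGraph W → Prop := fun _ H => H.Colorable 2

/-- `G` has a `Ψ`-cut: a vertex cut whose induced subgraph lies in `Ψ`. -/
def HasPsiCut (Ψ : ∀ (W : Type), SimpleGraph W → Prop) {V : Type} (G : SimpleGraph V) : Prop :=
  ∃ M : Set V, IsVertexCut G M ∧ Ψ ↥M (G.induce M)

/-- `G` has a forest cut. -/
def HasForestCut {V : Type*} (G : SimpleGraph V) : Prop :=
  ∃ M : Set V, IsVertexCut G M ∧ (G.induce M).IsAcyclic

/-- `G` has a bipartite cut. -/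
def HasBipartiteCut {V : Type*} (G : SimpleGraph V) : Prop :=
  ∃ M : Set V, IsVertexCut G M ∧ (G.induce M).Colorable 2

/-- `G` has an independent cut. -/
def HasIndependentCut {V : Type*} (G : SimpleGraph V) : Prop :=
  ∃ M : Set V, IsVertexCut G M ∧ ∀ x ∈ M, ∀ y ∈ M, ¬ G.Adj x y

/-- `G` is a minimal counterexample for the class `Ψ` and parameters `α`, `β`. -/
def MinCounterexample (Ψ : ∀ (W : Type), SimpleGraph W → Prop) (α β : ℝ)
    {V : Type} (G : SimpleGraph V) : Prop :=
  4 ≤ Nat.card V ∧ 0 < quality α β G ∧ ¬ HasPsiCut Ψ G ∧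
  ∀ (W : Type) (H : SimpleGraph W),
    4 ≤ Nat.card W → Nat.card W < Nat.card V → 0 < quality α β H → HasPsiCut Ψ H

/-- `T0`: a triangle together with an isolated vertex. -/
def graphT0 : SimpleGraph (Fin 4) := SimpleGraph.fromEdgeSet {s(0,1), s(0,2), s(1,2)}

/-- `T1`: a triangle with an extra vertex joined to exactly one triangle vertex. -/
def graphT1 : SimpleGraph (Fin 4) := SimpleGraph.fromEdgeSet {s(0,1), s(0,2), s(1,2), s(2,3)}

/-- The diamond graph `K4` minus one edge. -/
def diamondGraph : SimpleGraph (Fin 4) := (⊤ : SimpleGraph (Fin 4)).deleteEdges {s(0,1)}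

/-- Number of edges of `G` with one endpoint in `X` and the other outside `X`. -/
noncomputable def crossEdges {V : Type*} (G : SimpleGraph V) (X : Set V) : ℕ :=
  {e : Sym2 V | e ∈ G.edgeSet ∧ ∃ x ∈ X, ∃ y ∉ X, e = s(x,y)}.ncard

/-- The map sending `v` to `u` and fixing every other vertex, with values in `V ∖ {v}`. -/
noncomputable def foldMap {V : Type} (u v : V) (huv : u ≠ v) (x : V) : {x : V // x ≠ v} :=
  open Classical in if h : x = v then ⟨u, huv⟩ else ⟨x, h⟩

lemma foldMap_self {V : Type} {u v : V} (huv : u ≠ v) : foldMap u v huv v = ⟨u, huv⟩ := by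
  simp [foldMap]

lemma foldMap_of_ne {V : Type} {u v : V} (huv : u ≠ v) {x : V} (h : x ≠ v) :
    foldMap u v huv x = ⟨x, h⟩ := by
  simp [foldMap, h]

/-- The graph obtained from `G` by identifying `v` with `u`; the loop that would arise
from an edge `uv` is dropped. -/
def foldGraph {V : Type} (G : SimpleGraph V) (u v : V) (huv : u ≠ v) :
    SimpleGraph {x : V // x ≠ v} :=
  SimpleGraph.fromRel fun a b => ∃ x y, foldMap u v huv x = a ∧ foldMap u v huv y = b ∧ G.Adj x y

lemma foldMap_ne_of_adj {V : Type} {G : SimpleGraph V} {u v : V} (huv : u ≠ v)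
    (hna : ¬ G.Adj u v) {x y : V} (h : G.Adj x y) :
    foldMap u v huv x ≠ foldMap u v huv y := by
  intro he
  by_cases hx : x = v <;> by_cases hy : y = v
  · exact h.ne (hx.trans hy.symm)
  · subst hx
    rw [foldMap_self, foldMap_of_ne huv hy, Subtype.mk.injEq] at he
    exact hna (he ▸ h.symm)
  · subst hy
    rw [foldMap_self, foldMap_of_ne huv hx, Subtype.mk.injEq] at he
    exact hna (he ▸ h)
  · rw [foldMap_of_ne huv hy, foldMap_of_ne huv hx, Subtype.mk.injEq] at he
    exact h.ne he

lemma foldGraph_adj_of_adj {V : Type} {G : SimpleGraph V} {u v : V} (huv : u ≠ v)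
    (hna : ¬ G.Adj u v) {x y : V} (h : G.Adj x y) :
    (foldGraph G u v huv).Adj (foldMap u v huv x) (foldMap u v huv y) :=
  (SimpleGraph.fromRel_adj _ _ _).2 ⟨foldMap_ne_of_adj huv hna h, Or.inl ⟨x, y, rfl, rfl, h⟩⟩

lemma exists_adj_of_foldGraph_adj {V : Type} {G : SimpleGraph V} {u v : V} (huv : u ≠ v)
    {a b : {x : V // x ≠ v}} (h : (foldGraph G u v huv).Adj a b) :
    ∃ x y, foldMap u v huv x = a ∧ foldMap u v huv y = b ∧ G.Adj x y := by
  rcases ((SimpleGraph.fromRel_adj _ _ _).1 h).2 with h | ⟨x, y, hx, hy, h⟩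
  · exact h
  · exact ⟨y, x, hy, hx, h.symm⟩

/-- Bipartite cuts pull back along surjective graph homomorphisms. -/
lemma hasPsiCut_of_surjective_hom {V W : Type} {G : SimpleGraph V} {H : SimpleGraph W}
    (f : G →g H) (hf : Function.Surjective f) (h : HasPsiCut BipartiteClass H) :
    HasPsiCut BipartiteClass G := by
  obtain ⟨M, ⟨L, R, hL, hR, hd, hu, hadj⟩, hc⟩ := h
  refine ⟨f ⁻¹' M, ⟨f ⁻¹' L, f ⁻¹' R, hL.preimage hf, hR.preimage hf, hd.preimage f, ?_, ?_⟩, ?_⟩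
  · rw [← Set.preimage_union, hu, Set.preimage_compl]
  · exact fun x hx y hy h => hadj _ hx _ hy (f.map_adj h)
  · let g : G.induce (f ⁻¹' M) →g H.induce M :=
      { toFun := fun x => ⟨f x.1, x.2⟩
        map_rel' := fun h => f.map_adj h }
    exact SimpleGraph.Colorable.of_hom g hc

/-- Identifying two vertices loses at least one edge for each common neighbour. -/
lemma card_edgeSet_foldGraph_add_le {V : Type} [Fintype V] (G : SimpleGraph V) {u v : V}
    (huv : u ≠ v) :
    Nat.card (foldGraph G u v huv).edgeSet + (G.neighborSet u ∩ G.neighborSet v).ncard ≤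
      Nat.card G.edgeSet := by
  set N := G.neighborSet u ∩ G.neighborSet v
  set C : Set (Sym2 V) := (fun w => s(v, w)) '' N with hC
  have hCsub : C ⊆ G.edgeSet := by
    rintro _ ⟨w, hw, rfl⟩
    exact hw.2
  have hCcard : C.ncard = N.ncard :=
    Set.ncard_image_of_injective _ fun _ _ h => Sym2.congr_right.1 h
  -- Every edge of the quotient is the image of an edge outside `C`: replace `vw` by `uw`.
  have hsub : (foldGraph G u v huv).edgeSet ⊆
      Sym2.map (foldMap u v huv) '' (G.edgeSet \ C) := by
    intro e
    induction e with | _ a b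
    intro hab
    obtain ⟨x, y, rfl, rfl, hxy⟩ := exists_adj_of_foldGraph_adj huv hab
    by_cases hm : s(x, y) ∈ C
    · obtain ⟨w, hw, hwe⟩ := hm
      have hwv : w ≠ v := (G.ne_of_adj hw.2).symm
      refine ⟨s(u, w), ⟨hw.1, ?_⟩, ?_⟩
      · rintro ⟨w', -, he⟩
        rcases Sym2.eq_iff.1 he with ⟨h, -⟩ | ⟨h, -⟩
        · exact huv h.symm
        · exact hwv h.symm
      · rw [← Sym2.map_mk, ← hwe]
        simp [foldMap_self, foldMap_of_ne huv huv]
    · exact ⟨s(x, y), ⟨hxy, hm⟩, rfl⟩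
  have h1 : (foldGraph G u v huv).edgeSet.ncard ≤ (G.edgeSet \ C).ncard :=
    (Set.ncard_le_ncard hsub (Set.toFinite _)).trans (Set.ncard_image_le (Set.toFinite _))
  have h2 := Set.ncard_sdiff_add_ncard_of_subset hCsub (Set.toFinite _)
  rw [Nat.card_coe_set_eq, Nat.card_coe_set_eq]
  omega

/-- a minimal counterexample for bipartite cuts contains no pair of
non-adjacent vertices with at least three common neighbors. -/
theorem stmt17 (α β : ℝ) (hα1 : 2 < α) (hα2 : α ≤ 3) (hβ : 4 * α - β = 6)
    {V : Type} [Fintype V] (G : SimpleGraph V)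
    (hG : MinCounterexample BipartiteClass α β G) :
    ¬ ∃ u v : V, u ≠ v ∧ ¬ G.Adj u v ∧
      3 ≤ (G.neighborSet u ∩ G.neighborSet v).ncard := by
  rintro ⟨u, v, huv, hna, h3⟩
  obtain ⟨-, hq, hno, hmin⟩ := hG
  let f : G →g foldGraph G u v huv :=
    ⟨foldMap u v huv, fun h => foldGraph_adj_of_adj huv hna h⟩
  have hf : Function.Surjective f := fun a => ⟨a.1, foldMap_of_ne huv a.2⟩
  have hcard : Nat.card {x : V // x ≠ v} + 1 = Nat.card V := by
    classical
    have := Fintype.card_pos_iff.2 ⟨v⟩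
    rw [Nat.card_eq_fintype_card, Nat.card_eq_fintype_card, Fintype.card_subtype_compl,
      Fintype.card_subtype_eq]
    omega
  -- The common neighbours together with `u` lie in `V ∖ {v}`, so the quotient has four vertices.
  have h4 : 4 ≤ Nat.card {x : V // x ≠ v} := by
    have hu : u ∉ G.neighborSet u ∩ G.neighborSet v := fun h => G.irrefl h.1
    have hi := Set.ncard_insert_of_notMem hu (Set.toFinite _)
    have hsub : insert u (G.neighborSet u ∩ G.neighborSet v) ⊆ {x | x ≠ v} := by
      rintro x (rfl | hx)
      · exact huv
      · exact (G.ne_of_adj hx.2).symm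
    have hle := Set.ncard_le_ncard hsub (Set.toFinite _)
    rw [← Nat.card_coe_set_eq {x | x ≠ v}] at hle
    exact le_trans (by omega) hle
  have hedge := card_edgeSet_foldGraph_add_le G huv
  have hE : (Nat.card (foldGraph G u v huv).edgeSet : ℝ) + 3 ≤ Nat.card G.edgeSet := by
    exact_mod_cast le_trans (by omega) hedge
  have hV : (Nat.card {x : V // x ≠ v} : ℝ) + 1 = Nat.card V := by exact_mod_cast hcard
  refine hno (hasPsiCut_of_surjective_hom f hf (hmin _ _ h4 (by omega) ?_))
  unfold quality at hq ⊢
  rw [← hV] at hq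
  linarith
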